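/- arXiv:1612.02982 — 2 statements merged into one kernel-verified Lean document; each statement's English description precedes it below -/
import Mathlib

section
/- Let A ⊆ 2^ω be μ-measurable, let n ∈ ℕ, and set A_n = {s ∈ 2^{<ω} : μ(A ∩ U_s) > (1 − 2^{-n})·2^{-|s|}}. Suppose A* ⊆ A_n has the property that every element of A_n has an initial segment belonging to A* (for instance, A* may be taken to be the set of all elements of A_n having no proper initial segment in A_n, which forms an antichain). Then μ(A ∩ ⋃_{s∈A*} U_s) = μ(A), i.e. μ(A \ ⋃_{s∈A*} U_s) = 0. -/
open MeasureTheory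
open scoped ENNReal

/-- The basic cylinder `U_s ⊆ 2^ω` determined by a finite binary string `s`:
the set of all `x : ℕ → Bool` having `s` as an initial segment. -/
def cylinder (s : List Bool) : Set (ℕ → Bool) :=
  {x | ∀ i : ℕ, ∀ h : i < s.length, x i = s.get ⟨i, h⟩}

/-- The set `A_n` of finite binary strings `s` on which the measurable set `A` has
relative measure greater than `1 - 2^{-n}`, i.e.
`μ (A ∩ U_s) > (1 - 2^{-n}) · 2^{-|s|}`. -/
def densityLevel (μ : Measure (ℕ → Bool)) (A : Set (ℕ → Bool)) (n : ℕ) :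
    Set (List Bool) :=
  {s | (1 - (1 / 2 : ℝ≥0∞) ^ n) * (1 / 2 : ℝ≥0∞) ^ s.length < μ (A ∩ cylinder s)}

/-!
Let `B` be the part of `A` missed by the cylinders over `A*`. A cylinder `U_s` with `s ∈ A_n` does
not meet `B`, and every other one satisfies `μ (B ∩ U_s) ≤ c * μ U_s` with `c = 1 - 2⁻ⁿ < 1`. Since
every open set is a countable disjoint union of cylinders, `μ B ≤ c * μ V` for every open `V ⊇ B`,
and outer regularity forces `μ B = 0`.
-/

section Measure

variable {X : Type*} [MeasurableSpace X] {μ : Measure X} {B : Set X} {c : ℝ≥0∞}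

theorem measure_inter_biUnion_le_mul {ι : Type*} {S : Set ι} {U : ι → Set X}
    (hS : S.Countable) (hdisj : S.PairwiseDisjoint U) (hU : ∀ i ∈ S, MeasurableSet (U i))
    (hB : ∀ i ∈ S, μ (B ∩ U i) ≤ c * μ (U i)) :
    μ (B ∩ ⋃ i ∈ S, U i) ≤ c * μ (⋃ i ∈ S, U i) :=
  calc μ (B ∩ ⋃ i ∈ S, U i)
      = μ (⋃ i ∈ S, B ∩ U i) := by rw [Set.inter_iUnion₂]
    _ ≤ ∑' i : S, μ (B ∩ U i) := measure_biUnion_le μ hS _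
    _ ≤ ∑' i : S, c * μ (U i) := ENNReal.tsum_le_tsum fun i => hB i i.2
    _ = c * μ (⋃ i ∈ S, U i) := by rw [ENNReal.tsum_mul_left, measure_biUnion hS hdisj hU]

theorem measure_eq_zero_of_forall_isOpen_le_mul [TopologicalSpace X] [μ.OuterRegular]
    (hc : c < 1) (hB : μ B ≠ ∞) (h : ∀ V, IsOpen V → B ⊆ V → μ B ≤ c * μ V) : μ B = 0 := by
  by_contra hB0
  have hlt : μ B < μ B / c := by
    rw [ENNReal.lt_div_iff_mul_lt (Or.inr hB) (Or.inr hB0), mul_comm]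
    simpa only [one_mul] using ENNReal.mul_lt_mul_left hB0 hB hc
  obtain ⟨V, hBV, hV, hμV⟩ := B.exists_isOpen_lt_of_lt _ hlt
  exact (h V hV hBV).not_gt (ENNReal.mul_lt_of_lt_div' hμV)

end Measure

section MinimalPrefixes

variable {α : Type*}

/-- The strings of `S` having no proper initial segment in `S`. They form an antichain, which
serves to turn a union of cylinders into a disjoint one. -/
def minimalPrefixes (S : Set (List α)) : Set (List α) :=
  {s ∈ S | ∀ t ∈ S, t <+: s → t = s}

theorem exists_prefix_mem_minimalPrefixes {S : Set (List α)} {s : List α} (hs : s ∈ S) :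
    ∃ t ∈ minimalPrefixes S, t <+: s := by
  obtain ⟨t, ⟨htS, hts⟩, hmin⟩ :=
    exists_minimalFor_of_wellFoundedLT (fun t => t ∈ S ∧ t <+: s) List.length
      ⟨s, hs, List.prefix_rfl⟩
  exact ⟨t, ⟨htS, fun u huS hut => hut.eq_of_length_le
    (hmin ⟨huS, hut.trans hts⟩ hut.length_le)⟩, hts⟩

end MinimalPrefixes

section Cylinder

variable {s t : List Bool} {S : Set (List Bool)} {x : ℕ → Bool}

theorem cylinder_subset_cylinder (h : s <+: t) : cylinder t ⊆ cylinder s := by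
  obtain ⟨hlen, hget⟩ := List.prefix_iff_getElem.1 h
  exact fun x hx i hi => (hx i (hi.trans_le hlen)).trans (hget i hi).symm

theorem prefix_of_mem_cylinder (hs : x ∈ cylinder s) (ht : x ∈ cylinder t)
    (h : s.length ≤ t.length) : s <+: t :=
  List.prefix_iff_getElem.2
    ⟨h, fun i hi => (hs i hi).symm.trans (ht i (hi.trans_le h))⟩

theorem cylinder_subset_biUnion_cylinder (h : ∃ t ∈ S, t <+: s) :
    cylinder s ⊆ ⋃ t ∈ S, cylinder t := by
  obtain ⟨t, ht, hts⟩ := h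
  exact (cylinder_subset_cylinder hts).trans (Set.subset_biUnion_of_mem ht)

theorem biUnion_cylinder_minimalPrefixes (S : Set (List Bool)) :
    ⋃ s ∈ minimalPrefixes S, cylinder s = ⋃ s ∈ S, cylinder s :=
  (Set.biUnion_subset_biUnion_left fun _ hs => hs.1).antisymm
    (Set.iUnion₂_subset fun _ hs =>
      cylinder_subset_biUnion_cylinder (exists_prefix_mem_minimalPrefixes hs))

theorem pairwiseDisjoint_cylinder_minimalPrefixes (S : Set (List Bool)) :
    (minimalPrefixes S).PairwiseDisjoint _root_.cylinder := by
  intro s hs t ht hne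
  refine Set.disjoint_left.2 fun x hxs hxt => hne ?_
  rcases le_total s.length t.length with h | h
  · exact ht.2 s hs.1 (prefix_of_mem_cylinder hxs hxt h)
  · exact (hs.2 t ht.1 (prefix_of_mem_cylinder hxt hxs h)).symm

theorem range_cylinder :
    Set.range _root_.cylinder = {U | ∃ (x : ℕ → Bool) (k : ℕ), U = PiNat.cylinder x k} := by
  ext U
  constructor
  · rintro ⟨s, rfl⟩
    refine ⟨fun i => s.getD i false, s.length, ?_⟩
    ext y
    simp +contextual [_root_.cylinder, PiNat.cylinder]
  · rintro ⟨x, k, rfl⟩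
    refine ⟨List.ofFn fun i : Fin k => x i, ?_⟩
    ext y
    simp [_root_.cylinder, PiNat.cylinder]

theorem isTopologicalBasis_range_cylinder :
    TopologicalSpace.IsTopologicalBasis (Set.range _root_.cylinder) := by
  rw [range_cylinder]
  exact PiNat.isTopologicalBasis_cylinders fun _ => Bool

theorem isOpen_cylinder (s : List Bool) : IsOpen (cylinder s) :=
  isTopologicalBasis_range_cylinder.isOpen (Set.mem_range_self s)

theorem exists_pairwiseDisjoint_biUnion_cylinder_eq {V : Set (ℕ → Bool)} (hV : IsOpen V) :
    ∃ S : Set (List Bool), S.PairwiseDisjoint _root_.cylinder ∧ ⋃ s ∈ S, cylinder s = V := by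
  refine ⟨minimalPrefixes {s | cylinder s ⊆ V}, pairwiseDisjoint_cylinder_minimalPrefixes _, ?_⟩
  rw [biUnion_cylinder_minimalPrefixes]
  refine Set.Subset.antisymm (Set.iUnion₂_subset fun _ hsV => hsV) fun x hx => ?_
  obtain ⟨_, ⟨s, rfl⟩, hxs, hsV⟩ :=
    isTopologicalBasis_range_cylinder.exists_subset_of_mem_open hx hV
  exact Set.mem_biUnion hsV hxs

end Cylinder

theorem measure_eq_zero_of_forall_inter_cylinder_le_mul {μ : Measure (ℕ → Bool)} [μ.OuterRegular]
    {B : Set (ℕ → Bool)} {c : ℝ≥0∞} (hc : c < 1) (hB : μ B ≠ ∞)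
    (h : ∀ s, μ (B ∩ cylinder s) ≤ c * μ (cylinder s)) : μ B = 0 := by
  refine measure_eq_zero_of_forall_isOpen_le_mul hc hB fun V hV hBV => ?_
  obtain ⟨S, hdisj, rfl⟩ := exists_pairwiseDisjoint_biUnion_cylinder_eq hV
  simpa only [Set.inter_eq_left.2 hBV] using
    measure_inter_biUnion_le_mul S.to_countable hdisj
      (fun s _ => (isOpen_cylinder s).measurableSet) fun s _ => h s

theorem measure_inter_union_cylinders_of_densityLevel_general
    {μ : Measure (ℕ → Bool)} [μ.OuterRegular] {A : Set (ℕ → Bool)} (hA : μ A ≠ ∞)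
    {c : ℝ≥0∞} (hc : c < 1) {T : Set (List Bool)}
    (hT : ∀ s, c * μ (cylinder s) < μ (A ∩ cylinder s) → ∃ t ∈ T, t <+: s) :
    μ (A ∩ ⋃ t ∈ T, cylinder t) = μ A ∧ μ (A \ ⋃ t ∈ T, cylinder t) = 0 := by
  suffices hnull : μ (A \ ⋃ t ∈ T, cylinder t) = 0 from ⟨measure_inter_conull' hnull, hnull⟩
  refine measure_eq_zero_of_forall_inter_cylinder_le_mul hc
    (measure_ne_top_of_subset Set.sdiff_subset hA) fun s => ?_
  rcases lt_or_ge (c * μ (cylinder s)) (μ (A ∩ cylinder s)) with hdense | hsparse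
  · have hcovered : cylinder s ⊆ ⋃ t ∈ T, cylinder t :=
      cylinder_subset_biUnion_cylinder (hT s hdense)
    have hempty : (A \ ⋃ t ∈ T, cylinder t) ∩ cylinder s = ∅ :=
      (Set.disjoint_sdiff_left.mono_right hcovered).inter_eq
    simp only [hempty, measure_empty, zero_le]
  · exact (measure_mono (Set.inter_subset_inter_left _ Set.sdiff_subset)).trans hsparse

/-- Let `A ⊆ 2^ω` be `μ`-measurable (with `μ` the fair-coin measure),
`n ∈ ℕ`, and `A_n = {s : μ (A ∩ U_s) > (1 - 2^{-n}) · 2^{-|s|}}`.  If `A* ⊆ A_n` is such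
that every element of `A_n` has an initial segment in `A*`, then
`μ (A ∩ ⋃_{s ∈ A*} U_s) = μ A`, i.e. `μ (A \ ⋃_{s ∈ A*} U_s) = 0`. -/
theorem measure_inter_union_cylinders_of_densityLevel
    (μ : Measure (ℕ → Bool)) [IsProbabilityMeasure μ]
    (hμ : ∀ s : List Bool, μ (cylinder s) = (1 / 2 : ℝ≥0∞) ^ s.length)
    (A : Set (ℕ → Bool)) (hA : NullMeasurableSet A μ) (n : ℕ)
    (Astar : Set (List Bool))
    (hsub : Astar ⊆ densityLevel μ A n)
    (hcov : ∀ s ∈ densityLevel μ A n, ∃ t ∈ Astar, t <+: s) :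
    μ (A ∩ ⋃ s ∈ Astar, cylinder s) = μ A ∧ μ (A \ ⋃ s ∈ Astar, cylinder s) = 0 := by
  have hc : 1 - (1 / 2 : ℝ≥0∞) ^ n < 1 :=
    ENNReal.sub_lt_self ENNReal.one_ne_top one_ne_zero (pow_ne_zero n (by simp))
  exact measure_inter_union_cylinders_of_densityLevel_general (measure_ne_top μ A) hc
    fun s hs => hcov s (by rwa [hμ] at hs)
end

section
/- Let ε > 0 and let P ⊆ 2^ω × 2^ω be measurable for the product measure μ⊗μ. Let ⟨A_s⟩_{s∈2^{<ω}} and ⟨B_s⟩_{s∈2^{<ω}} be families of μ-measurable subsets of 2^ω such that: (i) A_t ⊆ A_s whenever s is an initial segment of t; (ii) μ(⋂_{n∈ℕ} A_{x↾n}) = 0 for every x ∈ 2^ω; (iii) ∑_{s∈2^n} μ(B_s) ≤ 1 for every n ∈ ℕ (the sum ranging over all binary strings of length n); and (iv) (μ⊗μ)(P \ ⋃_{s∈2^n} (A_s × B_s)) = 0 for every n ∈ ℕ. Then (μ⊗μ)(P) = 0. -/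
open MeasureTheory
open scoped ENNReal

/-! The sets `A s` become uniformly small: for every `δ > 0`, continuity of `μ` from above gives
each branch `x` some `n` with `μ (A (x↾n)) < δ`, and compactness of the branch space makes one
level `n` work for all `x`. At that level the rectangles covering `P` up to a null set have total
measure at most `∑ s, δ * μ (B s) ≤ δ`. -/

section Strings

variable {ι : Type*}

lemma ofFn_prefix_ofFn (x : ℕ → ι) {m n : ℕ} (hmn : m ≤ n) :
    (List.ofFn fun i : Fin m => x i) <+: List.ofFn fun i : Fin n => x i := by
  obtain ⟨k, rfl⟩ := Nat.exists_eq_add_of_le hmn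
  exact ⟨_, (List.ofFn_add (f := fun i : Fin (m + k) => x i)).symm⟩

lemma exists_ofFn_eq [Nonempty ι] (s : List ι) :
    ∃ x : ℕ → ι, (List.ofFn fun i : Fin s.length => x i) = s := by
  inhabit ι
  exact ⟨fun i => s.getD i default, List.ext_getElem (by simp) (by simp +contextual)⟩

lemma isOpen_setOf_ofFn [TopologicalSpace ι] [DiscreteTopology ι] (p : List ι → Prop) (n : ℕ) :
    IsOpen {x : ℕ → ι | p (List.ofFn fun i : Fin n => x i)} := by
  have hrestrict : Continuous fun (x : ℕ → ι) (i : Fin n) => x i := by fun_prop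
  exact (isOpen_discrete {y : Fin n → ι | p (List.ofFn y)}).preimage hrestrict

/-- Brouwer's fan theorem for a monotone bar. -/
theorem exists_forall_length_eq_of_forall_branch [Finite ι] {p : List ι → Prop}
    (hp : ∀ s t : List ι, s <+: t → p s → p t)
    (hbar : ∀ x : ℕ → ι, ∃ n : ℕ, p (List.ofFn fun i : Fin n => x i)) :
    ∃ n : ℕ, ∀ s : List ι, s.length = n → p s := by
  obtain hι | hι := isEmpty_or_nonempty ι
  · exact ⟨1, fun s hs => by simp [Subsingleton.elim s []] at hs⟩
  let : TopologicalSpace ι := ⊥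
  have : DiscreteTopology ι := ⟨rfl⟩
  let U : ℕ → Set (ℕ → ι) := fun n => {x | p (List.ofFn fun i : Fin n => x i)}
  have hUmono : Monotone U := fun m n hmn x => hp _ _ (ofFn_prefix_ofFn x hmn)
  obtain ⟨n, hn⟩ : ∃ n, Set.univ ⊆ U n :=
    isCompact_univ.elim_directed_cover U (isOpen_setOf_ofFn p)
      (fun x _ => Set.mem_iUnion.2 (hbar x)) hUmono.directed_le
  refine ⟨n, ?_⟩
  rintro s rfl
  obtain ⟨x, hx⟩ := exists_ofFn_eq s
  exact hx ▸ hn (Set.mem_univ x)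

end Strings

section Measure

variable {α β ι : Type*} [MeasurableSpace α] [MeasurableSpace β]

theorem exists_forall_length_eq_measure_lt [Finite ι] {μ : Measure α} {A : List ι → Set α}
    (hAmeas : ∀ s : List ι, NullMeasurableSet (A s) μ) (hAfin : μ (A []) ≠ ∞)
    (hmono : ∀ s t : List ι, s <+: t → A t ⊆ A s)
    (hnull : ∀ x : ℕ → ι, μ (⋂ n : ℕ, A (List.ofFn fun i : Fin n => x i)) = 0)
    {δ : ℝ≥0∞} (hδ : 0 < δ) :
    ∃ n : ℕ, ∀ s : List ι, s.length = n → μ (A s) < δ := by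
  refine exists_forall_length_eq_of_forall_branch
    (fun s t hst hs => (measure_mono (hmono s t hst)).trans_lt hs) fun x => ?_
  have hanti : Antitone fun n : ℕ => A (List.ofFn fun i : Fin n => x i) :=
    fun _ _ hmn => hmono _ _ (ofFn_prefix_ofFn x hmn)
  have hinf : ⨅ n : ℕ, μ (A (List.ofFn fun i : Fin n => x i)) = 0 :=
    (hanti.measure_iInter (fun _ => hAmeas _) ⟨0, by simpa using hAfin⟩).symm.trans (hnull x)
  exact iInf_lt_iff.1 (hinf.trans_lt hδ)

lemma prod_iUnion_prod_le_mul_tsum [Countable ι] (μ : Measure α) (ν : Measure β) [SFinite ν]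
    {A : ι → Set α} (B : ι → Set β) {δ : ℝ≥0∞} (hA : ∀ i, μ (A i) ≤ δ) :
    μ.prod ν (⋃ i, A i ×ˢ B i) ≤ δ * ∑' i, ν (B i) :=
  calc μ.prod ν (⋃ i, A i ×ˢ B i)
      ≤ ∑' i, μ.prod ν (A i ×ˢ B i) := measure_iUnion_le _
    _ = ∑' i, μ (A i) * ν (B i) := by simp only [Measure.prod_prod]
    _ ≤ ∑' i, δ * ν (B i) := ENNReal.tsum_le_tsum fun i => mul_le_mul_left (hA i) _
    _ = δ * ∑' i, ν (B i) := ENNReal.tsum_mul_left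

theorem prod_measure_null_of_rectangle_covers_general [Finite ι]
    {μ : Measure α} {ν : Measure β} [SFinite ν] {P : Set (α × β)}
    {A : List ι → Set α} {B : List ι → Set β} {C : ℝ≥0∞}
    (hAmeas : ∀ s : List ι, NullMeasurableSet (A s) μ) (hAfin : μ (A []) ≠ ∞)
    (hmono : ∀ s t : List ι, s <+: t → A t ⊆ A s)
    (hnull : ∀ x : ℕ → ι, μ (⋂ n : ℕ, A (List.ofFn fun i : Fin n => x i)) = 0)
    (hC : C ≠ ∞) (hBsum : ∀ n : ℕ, (∑' s : {s : List ι // s.length = n}, ν (B s.1)) ≤ C)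
    (hcov : ∀ n : ℕ,
      μ.prod ν (P \ ⋃ s : {s : List ι // s.length = n}, A s.1 ×ˢ B s.1) = 0) :
    μ.prod ν P = 0 := by
  by_contra hP
  obtain ⟨δ, hδ, hδC⟩ := ENNReal.exists_pos_mul_lt hC hP
  obtain ⟨n, hn⟩ := exists_forall_length_eq_measure_lt hAmeas hAfin hmono hnull hδ
  refine hδC.not_ge ?_
  calc μ.prod ν P
      ≤ μ.prod ν (⋃ s : {s : List ι // s.length = n}, A s.1 ×ˢ B s.1) :=
        measure_mono_ae (ae_le_set.2 (hcov n))
    _ ≤ δ * ∑' s : {s : List ι // s.length = n}, ν (B s.1) :=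
        prod_iUnion_prod_le_mul_tsum μ ν _ fun s => (hn s.1 s.2).le
    _ ≤ δ * C := mul_le_mul_right (hBsum n) δ

end Measure

/-- Let `ε > 0` and let `P ⊆ 2^ω × 2^ω` be measurable for the product
measure `μ ⊗ μ` (with `μ` the fair-coin measure on `2^ω`).  Let `⟨A_s⟩` and `⟨B_s⟩` be
families of `μ`-measurable subsets of `2^ω` such that:
(i) `A_t ⊆ A_s` whenever `s` is an initial segment of `t`;
(ii) `μ (⋂ n, A_{x↾n}) = 0` for every `x ∈ 2^ω`;
(iii) `∑_{s ∈ 2^n} μ (B_s) ≤ 1` for every `n`;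
(iv) `(μ ⊗ μ) (P \ ⋃_{s ∈ 2^n} (A_s × B_s)) = 0` for every `n`.
Then `(μ ⊗ μ) P = 0`. -/
theorem prod_measure_null_of_rectangle_covers
    (μ : Measure (ℕ → Bool)) [IsProbabilityMeasure μ]
    (hμ : ∀ s : List Bool, μ (cylinder s) = (1 / 2 : ℝ≥0∞) ^ s.length)
    (ε : ℝ) (hε : 0 < ε)
    (P : Set ((ℕ → Bool) × (ℕ → Bool)))
    (hP : NullMeasurableSet P (μ.prod μ))
    (A B : List Bool → Set (ℕ → Bool))
    (hAmeas : ∀ s : List Bool, NullMeasurableSet (A s) μ)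
    (hBmeas : ∀ s : List Bool, NullMeasurableSet (B s) μ)
    (hmono : ∀ s t : List Bool, s <+: t → A t ⊆ A s)
    (hnull : ∀ x : ℕ → Bool, μ (⋂ n : ℕ, A (List.ofFn fun i : Fin n => x i)) = 0)
    (hBsum : ∀ n : ℕ, (∑' s : {s : List Bool // s.length = n}, μ (B s.1)) ≤ 1)
    (hcov : ∀ n : ℕ,
      (μ.prod μ) (P \ ⋃ s : {s : List Bool // s.length = n}, A s.1 ×ˢ B s.1) = 0) :
    μ.prod μ P = 0 :=
  prod_measure_null_of_rectangle_covers_general hAmeas (measure_ne_top μ _) hmono hnull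
    ENNReal.one_ne_top hBsum hcov
end
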